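/- arXiv:1908.04937 — 2 statements merged into one kernel-verified Lean document; each statement's English description precedes it below -/
import Mathlib

section
/- Let P[1..m] and S[1..m] be strings over a linearly ordered alphabet. If S[GP_P(i)] ⪯ S[i] for all 1 ≤ i ≤ m, then S[k] ⪯ S[PC_P(k)] for every 1 ≤ k ≤ m. (Claim 1 in the proof of Theorem 3.) -/
/-!
For each position `i` there is at most one `k > i` with `PC P k = i`: such a `k` satisfies
`P k < P i`, while every position strictly between `i` and `k` carries a value
at least `P i`, since `i` is the minimum of a range of positions ending just before `k`. Two such `k` would contradict each other. Hence if `PC P k ≠ k`, then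
`GP P (PC P k) = k`, and the hypothesis at `PC P k` is the conclusion at `k`.
-/

namespace CTM

variable {α : Type*} [LinearOrder α] {n : ℕ}

/-- `S[i] ≺ S[j]`: strict order on positions, values compared first, ties broken
toward the smaller index. -/
def prec (S : Fin n → α) (i j : Fin n) : Prop :=
  S i < S j ∨ (S i = S j ∧ i < j)

instance (S : Fin n → α) (i j : Fin n) : Decidable (prec S i j) :=
  inferInstanceAs (Decidable (_ ∨ _))

/-- `S[i] ⪯ S[j]`. -/
def preceq (S : Fin n → α) (i j : Fin n) : Prop :=
  i = j ∨ prec S i j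

/-- The set `{j : j < i and S[j] ≺ S[i]}`. -/
def PPset (S : Fin n → α) (i : Fin n) : Finset (Fin n) :=
  Finset.univ.filter (fun j => j < i ∧ prec S j i)

/-- Prefix-parent representation. -/
def PP (S : Fin n → α) (i : Fin n) : Fin n :=
  if h : (PPset S i).Nonempty then (PPset S i).max' h else i

lemma PP_le (S : Fin n → α) (i : Fin n) : PP S i ≤ i := by
  unfold PP
  split
  · next h =>
      have hm := (PPset S i).max'_mem h
      simp only [PPset, Finset.mem_filter] at hm
      exact le_of_lt hm.2.1
  · exact le_refl i

/-- The ≺-minimum position of a nonempty finite set of positions. -/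
noncomputable def minPos (S : Fin n → α) (F : Finset (Fin n)) (h : F.Nonempty) : Fin n :=
  (F.exists_min_image (fun j => toLex (S j, j)) h).choose

lemma minPos_mem (S : Fin n → α) (F : Finset (Fin n)) (h : F.Nonempty) :
    minPos S F h ∈ F :=
  (F.exists_min_image (fun j => toLex (S j, j)) h).choose_spec.1

/-- Prefix-child representation (0-indexed: position `0` is the first position). -/
noncomputable def PC (S : Fin n → α) (i : Fin n) : Fin n :=
  if h0 : i.val = 0 then i
  else if h1 : PP S i = i then
    minPos S (Finset.univ.filter (fun j => j < i))
      ⟨⟨0, i.pos⟩, Finset.mem_filter.mpr ⟨Finset.mem_univ _, by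
        simp only [Fin.lt_def]; omega⟩⟩
  else if _h2 : (PP S i).val + 1 = i.val then i
  else
    minPos S (Finset.univ.filter (fun j => PP S i < j ∧ j < i))
      ⟨⟨(PP S i).val + 1, by
          have h3 : (PP S i).val < i.val := Fin.lt_def.mp (lt_of_le_of_ne (PP_le S i) h1)
          have h4 := i.isLt
          omega⟩,
        Finset.mem_filter.mpr ⟨Finset.mem_univ _, by
          have h3 : (PP S i).val < i.val := Fin.lt_def.mp (lt_of_le_of_ne (PP_le S i) h1)
          constructor <;> simp only [Fin.lt_def] <;> omega⟩⟩

/-- Global-parent representation. -/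
noncomputable def GP (S : Fin n → α) (i : Fin n) : Fin n :=
  if h : ∃ j, i < j ∧ PC S j = i then h.choose else PP S i

/-- Binary trees whose nodes are positions of a string of length `n`. -/
inductive PosTree (n : ℕ) where
  | nil : PosTree n
  | node : Fin n → PosTree n → PosTree n → PosTree n

/-- The Cartesian tree of the restriction of `S` to a finite set of positions. -/
noncomputable def CTAux (S : Fin n → α) (F : Finset (Fin n)) : PosTree n :=
  if h : F.Nonempty then
    PosTree.node (minPos S F h)
      (CTAux S (F.filter (fun j => j < minPos S F h)))
      (CTAux S (F.filter (fun j => minPos S F h < j)))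
  else PosTree.nil
termination_by F.card
decreasing_by
  · exact Finset.card_lt_card
      (Finset.filter_ssubset.mpr ⟨minPos S F h, minPos_mem S F h, by simp⟩)
  · exact Finset.card_lt_card
      (Finset.filter_ssubset.mpr ⟨minPos S F h, minPos_mem S F h, by simp⟩)

/-- The Cartesian tree of a string, as a binary tree on positions. -/
noncomputable def CT (S : Fin n → α) : PosTree n :=
  CTAux S Finset.univ

/-- Parent-distance representation. -/
def PD (S : Fin n → α) (i : Fin n) : ℕ :=
  if h : (PPset S i).Nonempty then i.val - ((PPset S i).max' h).val else 0


lemma minPos_filter (S : Fin n → α) (p : Fin n → Prop) [DecidablePred p]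
    (h : (Finset.univ.filter p).Nonempty) : p (minPos S (Finset.univ.filter p) h) :=
  (Finset.mem_filter.mp (minPos_mem S _ h)).2

lemma minPos_le (S : Fin n → α) (F : Finset (Fin n)) (h : F.Nonempty) {j : Fin n}
    (hj : j ∈ F) : S (minPos S F h) ≤ S j := by
  have h1 := (F.exists_min_image (fun j => toLex (S j, j)) h).choose_spec.2 j hj
  rw [Prod.Lex.toLex_le_toLex] at h1
  rcases h1 with h1 | h1
  · exact h1.le
  · exact h1.1.le

/-- By maximality of the prefix-parent, `i` does not precede `k` in `≺`. Since ties favour the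
smaller index and `i < k`, this forces a strict inequality of values. -/
lemma lt_of_PP_lt (S : Fin n → α) {i k : Fin n} (hik : i < k)
    (h : PP S k = k ∨ PP S k < i) : S k < S i := by
  by_contra hc
  have hmem : i ∈ PPset S k := by
    simp only [PPset, Finset.mem_filter, Finset.mem_univ, true_and]
    refine ⟨hik, ?_⟩
    rcases (not_lt.mp hc).lt_or_eq with h1 | h1
    · exact Or.inl h1
    · exact Or.inr ⟨h1, hik⟩
  have hne : (PPset S k).Nonempty := ⟨i, hmem⟩
  have hPP : PP S k = (PPset S k).max' hne := dif_pos hne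
  rcases h with h | h
  · have hm := (PPset S k).max'_mem hne
    rw [← hPP, h] at hm
    simp [PPset] at hm
  · exact absurd ((PPset S k).le_max' i hmem) (not_le.mpr (hPP ▸ h))

lemma PC_le (S : Fin n → α) (k : Fin n) : PC S k ≤ k := by
  unfold PC
  split_ifs
  · exact le_rfl
  · exact (minPos_filter S (fun j => j < k) _).le
  · exact le_rfl
  · exact (minPos_filter S (fun j => PP S k < j ∧ j < k) _).2.le

/-- When `PC S k` lies strictly before `k`, every position between them carries a value at
least that of `PC S k`, and `k` itself carries a strictly smaller value. -/
lemma PC_spec (S : Fin n → α) {k : Fin n} (hk : PC S k < k) :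
    S k < S (PC S k) ∧ ∀ j, PC S k < j → j < k → S (PC S k) ≤ S j := by
  have key : (PP S k = k ∨ PP S k < PC S k) ∧
      ∀ j, PC S k < j → j < k → S (PC S k) ≤ S j := by
    unfold PC at hk ⊢
    split_ifs at hk ⊢ with h0 h1 h2
    · exact absurd hk (lt_irrefl _)
    · exact ⟨Or.inl h1, fun j _ hj => minPos_le S _ _ (by simpa using hj)⟩
    · exact absurd hk (lt_irrefl _)
    · refine ⟨Or.inr (minPos_filter S (fun j => PP S k < j ∧ j < k) _).1, fun j hij hj => ?_⟩
      refine minPos_le S _ _ (Finset.mem_filter.mpr ⟨Finset.mem_univ _, ?_, hj⟩)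
      exact (minPos_filter S (fun j => PP S k < j ∧ j < k) _).1.trans hij
  exact ⟨lt_of_PP_lt S hk key.1, key.2⟩

lemma PC_unique (S : Fin n → α) {i j k : Fin n} (hij : i < j) (hik : i < k)
    (hj : PC S j = i) (hk : PC S k = i) : j = k := by
  have hjs := PC_spec S (hj.trans_lt hij)
  have hks := PC_spec S (hk.trans_lt hik)
  rw [hj] at hjs
  rw [hk] at hks
  rcases lt_trichotomy j k with h | h | h
  · exact absurd hjs.1 (not_lt.mpr (hks.2 j hij h))
  · exact h
  · exact absurd hks.1 (not_lt.mpr (hjs.2 k hik h))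

/-- Claim 1 in the proof of Theorem 3: if `S[GP_P(i)] ⪯ S[i]` for all `i`,
then `S[k] ⪯ S[PC_P(k)]` for every `k`. -/
theorem gp_imp_pc (m : ℕ) (P S : Fin m → α)
    (hgp : ∀ i : Fin m, preceq S (GP P i) i) :
    ∀ k : Fin m, preceq S k (PC P k) := by
  intro k
  rcases (PC_le P k).lt_or_eq with hk | hk
  · have h : ∃ j, PC P k < j ∧ PC P j = PC P k := ⟨k, hk, rfl⟩
    have hGP : GP P (PC P k) = k := by
      rw [GP, dif_pos h]
      exact PC_unique P h.choose_spec.1 hk h.choose_spec.2 rfl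
    simpa only [hGP] using hgp (PC P k)
  · exact Or.inl hk.symm

end CTM
end

section
/- Let P[1..m] and S[1..m] be strings over a linearly ordered alphabet. If S[GP_P(i)] ⪯ S[i] for all 1 ≤ i ≤ m, then S[PP_P(k)] ⪯ S[k] for every 1 ≤ k ≤ m. (Claim 2 in the proof of Theorem 3.) -/
/-!
`GP P k` is the parent of `k` in the Cartesian tree of `P`, and `PP P k` is an ancestor of `k`:
the nearest one to the left, or `k` itself when there is none. So `S` being heap-ordered along parent edges gives the claim by
walking up the tree. Concretely, if `GP P k` is not `PP P k`, then it is some `j > k` whose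
left child is `k`. Either `PP P j = j`, in which case `k` is the minimum of the whole prefix
before `j` and `PP P k = k`; or `PP P k = PP P j` (lemma `PP_of_PC`), and downward induction on
the position gives `S[PP P k] = S[PP P j] ⪯ S[j] ⪯ S[k]`.
-/

namespace CTM

variable {α : Type*} [LinearOrder α] {n : ℕ}

lemma preceq_trans (S : Fin n → α) {i j k : Fin n} (h₁ : preceq S i j) (h₂ : preceq S j k) :
    preceq S i k := by
  unfold preceq prec at *
  grind

lemma prec_of_not_prec (S : Fin n → α) {i j : Fin n} (hne : i ≠ j) (h : ¬ prec S i j) :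
    prec S j i := by
  unfold prec at *
  grind

lemma prec_trans (S : Fin n → α) {i j k : Fin n} (h₁ : prec S i j) (h₂ : prec S j k) :
    prec S i k := by
  unfold prec at *
  grind

lemma not_prec_minPos (S : Fin n → α) (F : Finset (Fin n)) (h : F.Nonempty) {j : Fin n}
    (hj : j ∈ F) : ¬ prec S j (minPos S F h) := by
  have h1 := (F.exists_min_image (fun j => toLex (S j, j)) h).choose_spec.2 j hj
  change toLex (S (minPos S F h), minPos S F h) ≤ toLex (S j, j) at h1
  rw [Prod.Lex.toLex_le_toLex] at h1
  unfold prec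
  grind

lemma mem_PPset (S : Fin n → α) {i j : Fin n} : j ∈ PPset S i ↔ j < i ∧ prec S j i := by
  simp [PPset]

lemma PP_mem (S : Fin n → α) {i : Fin n} (h : PP S i ≠ i) : PP S i < i ∧ prec S (PP S i) i := by
  rw [← mem_PPset]
  unfold PP at h ⊢
  split_ifs at h ⊢ with hne
  · exact Finset.max'_mem _ hne
  · exact absurd rfl h

lemma le_PP (S : Fin n → α) {i x : Fin n} (hx : x < i) (h : prec S x i) : x ≤ PP S i := by
  have hm : x ∈ PPset S i := (mem_PPset S).2 ⟨hx, h⟩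
  rw [PP, dif_pos ⟨x, hm⟩]
  exact Finset.le_max' _ x hm

/-- When `PP S i = i` by the default value, no smaller position precedes `i`. -/
lemma not_prec_of_PP_eq (S : Fin n → α) {i x : Fin n} (h : PP S i = i) (hx : x < i) :
    ¬ prec S x i := by
  intro hp
  have hm : x ∈ PPset S i := (mem_PPset S).2 ⟨hx, hp⟩
  rw [PP, dif_pos ⟨x, hm⟩] at h
  have hmax := (mem_PPset S).1 (Finset.max'_mem _ ⟨x, hm⟩)
  rw [h] at hmax
  exact lt_irrefl _ hmax.1

/-- A left child `k` of `j` has the same prefix-parent as `j`, or none when `j` has none. -/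
lemma PP_of_PC (S : Fin n → α) {j k : Fin n} (hkj : k < j) (hPC : PC S j = k) :
    PP S k = k ∨ PP S k = PP S j := by
  unfold PC at hPC
  split_ifs at hPC with h0 h1 h2
  · exact absurd hPC.symm hkj.ne
  · left
    by_contra hk
    obtain ⟨hlt, hp⟩ := PP_mem S hk
    rw [← hPC] at hp
    refine not_prec_minPos S _ _ ?_ hp
    simpa [hPC] using hlt.trans hkj
  · exact absurd hPC.symm hkj.ne
  · right
    obtain ⟨-, hpj⟩ := PP_mem S h1
    -- `k` is the minimum of the open interval between `PP S j` and `j`.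
    have hmem : PP S j < k ∧ k < j := by
      rw [← Finset.mem_filter_univ (p := fun x => PP S j < x ∧ x < j), ← hPC]
      exact minPos_mem S _ _
    have hjk : prec S j k :=
      prec_of_not_prec S hkj.ne fun h => absurd (le_PP S hkj h) (not_le.2 hmem.1)
    have hle : PP S j ≤ PP S k := le_PP S hmem.1 (prec_trans S hpj hjk)
    refine (eq_of_le_of_not_lt hle fun hlt => ?_).symm
    have hk : PP S k ≠ k := fun h => not_prec_of_PP_eq S h hmem.1 (prec_trans S hpj hjk)
    obtain ⟨hlt', hp⟩ := PP_mem S hk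
    rw [← hPC] at hp
    refine not_prec_minPos S _ _ ?_ hp
    simpa [hPC] using And.intro hlt (hlt'.trans hkj)

/-- Claim 2 in the proof of Theorem 3: if `S[GP_P(i)] ⪯ S[i]` for all `i`,
then `S[PP_P(k)] ⪯ S[k]` for every `k`. -/
theorem gp_imp_pp (m : ℕ) (P S : Fin m → α)
    (hgp : ∀ i : Fin m, preceq S (GP P i) i) :
    ∀ k : Fin m, preceq S (PP P k) k := by
  intro k
  induction k using WellFoundedGT.induction with
  | ind k ih =>
    have hk := hgp k
    unfold GP at hk
    split_ifs at hk with h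
    · obtain ⟨hlt, hPC⟩ := h.choose_spec
      rcases PP_of_PC P hlt hPC with h' | h'
      · exact Or.inl h'
      · rw [h']
        exact preceq_trans S (ih _ hlt) hk
    · exact hk

end CTM
end
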